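/- arXiv:2105.09985 — 5 statements merged into one kernel-verified Lean document; each statement's English description precedes it below -/
import Mathlib

section
/- Suppose that for each ℓ ∈ {0,1}, the event Y is conditionally independent of the pair (V, V̂) given L_ℓ, in the sense that for all a, b ∈ {0,1} one has μ(Y ∩ Vᵃ ∩ V̂ᵇ ∩ L_ℓ) · μ(L_ℓ) = μ(Y ∩ L_ℓ) · μ(Vᵃ ∩ V̂ᵇ ∩ L_ℓ). Then G = Ĝ. -/
/-!
Summing the factorization over the two values of the other covariate shows that `Y` is independent
of `V` alone, and of `V̂` alone, given each `L ℓ`. Conditioning further on either covariate then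
leaves `P(Y | L ℓ)` unchanged, so both gaps equal `P(Y | L₁) - P(Y | L₀)`.
-/

open MeasureTheory

/-- Conditional probability `P(A | B) = μ(A ∩ B) / μ(B)` as a real number. -/
noncomputable def condP {Ω : Type*} [MeasurableSpace Ω] (μ : Measure Ω) (A B : Set Ω) : ℝ :=
  (μ (A ∩ B)).toReal / (μ B).toReal

/-- `ev S true = S` (the event `s = 1`) and `ev S false = Sᶜ` (the event `s = 0`). -/
def ev {Ω : Type*} (S : Set Ω) (b : Bool) : Set Ω := bif b then S else Sᶜ

open scoped ENNReal

section

variable {Ω : Type*} [MeasurableSpace Ω] {μ : Measure Ω} {Y A B L : Set Ω}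

/-- Conditional independence of the events `Y` and `A` given the event `L`. It is stated in product
form, so that it makes sense for nonmeasurable sets and involves no division by `μ L`. -/
def CondIndepEvent (μ : Measure Ω) (Y A L : Set Ω) : Prop :=
  μ (Y ∩ A ∩ L) * μ L = μ (Y ∩ L) * μ (A ∩ L)

theorem sum_measure_inter_ev (hB : MeasurableSet B) (S : Set Ω) :
    ∑ b, μ (S ∩ ev B b) = μ S := by
  simpa only [Fintype.sum_bool, ev, cond_true, cond_false, Set.sdiff_eq]
    using measure_inter_add_sdiff S hB

namespace CondIndepEvent

theorem of_forall_inter_ev (hB : MeasurableSet B)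
    (h : ∀ b, CondIndepEvent μ Y (A ∩ ev B b) L) : CondIndepEvent μ Y A L :=
  calc μ (Y ∩ A ∩ L) * μ L
      = ∑ b, μ (Y ∩ (A ∩ ev B b) ∩ L) * μ L := by
        simp only [← Finset.sum_mul, ← Set.inter_assoc, Set.inter_right_comm _ (ev B _) L,
          sum_measure_inter_ev hB]
    _ = ∑ b, μ (Y ∩ L) * μ (A ∩ ev B b ∩ L) := Finset.sum_congr rfl fun b _ ↦ h b
    _ = μ (Y ∩ L) * μ (A ∩ L) := by
        simp only [← Finset.mul_sum, Set.inter_right_comm _ (ev B _) L, sum_measure_inter_ev hB]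

theorem condP_inter_eq (h : CondIndepEvent μ Y A L) (hL : μ L ≠ ∞) (hAL : μ (A ∩ L) ≠ 0) :
    condP μ Y (A ∩ L) = condP μ Y L := by
  have hL_ne_zero : (μ L).toReal ≠ 0 :=
    ENNReal.toReal_ne_zero.2 ⟨fun h₀ ↦ hAL (measure_inter_null_of_null_right A h₀), hL⟩
  have hAL_ne_zero : (μ (A ∩ L)).toReal ≠ 0 :=
    ENNReal.toReal_ne_zero.2 ⟨hAL, measure_inter_ne_top_of_right_ne_top hL⟩
  rw [condP, condP, div_eq_div_iff hAL_ne_zero hL_ne_zero, ← Set.inter_assoc, ← ENNReal.toReal_mul,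
    ← ENNReal.toReal_mul, show μ (Y ∩ A ∩ L) * μ L = μ (Y ∩ L) * μ (A ∩ L) from h]

end CondIndepEvent

end

theorem stmt_0_general {Ω ι : Type*} [MeasurableSpace Ω] {μ : Measure Ω}
    {Y V Vh : Set Ω} {L : ι → Set Ω} (hL : ∀ l, μ (L l) ≠ ∞)
    (hVL : ∀ l, μ (V ∩ L l) ≠ 0) (hVhL : ∀ l, μ (Vh ∩ L l) ≠ 0)
    (hV : ∀ l, CondIndepEvent μ Y V (L l)) (hVh : ∀ l, CondIndepEvent μ Y Vh (L l)) (i j : ι) :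
    condP μ Y (V ∩ L i) - condP μ Y (V ∩ L j)
      = condP μ Y (Vh ∩ L i) - condP μ Y (Vh ∩ L j) := by
  have gap_eq {A : Set Ω} (hAL : ∀ l, μ (A ∩ L l) ≠ 0) (hA : ∀ l, CondIndepEvent μ Y A (L l)) :
      condP μ Y (A ∩ L i) - condP μ Y (A ∩ L j) = condP μ Y (L i) - condP μ Y (L j) := by
    rw [(hA i).condP_inter_eq (hL i) (hAL i), (hA j).condP_inter_eq (hL j) (hAL j)]
  rw [gap_eq hVL hV, gap_eq hVhL hVh]

/-- If `Y` is conditionally independent of the pair `(V, V̂)` given `L ℓ` for each `ℓ`,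
then the true gap `G` equals the proxy gap `Ĝ`. -/
theorem stmt_0 {Ω : Type*} [MeasurableSpace Ω] (μ : Measure Ω) [IsProbabilityMeasure μ]
    (Y V Vh : Set Ω) (L : Bool → Set Ω)
    (hY : MeasurableSet Y) (hV : MeasurableSet V) (hVh : MeasurableSet Vh)
    (hL : ∀ l, MeasurableSet (L l))
    (hposL : ∀ l, 0 < μ (L l))
    (hposVL : ∀ l, 0 < μ (V ∩ L l))
    (hposVhL : ∀ l, 0 < μ (Vh ∩ L l))
    (hind : ∀ (l a b : Bool),
      μ (Y ∩ ev V a ∩ ev Vh b ∩ L l) * μ (L l)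
        = μ (Y ∩ L l) * μ (ev V a ∩ ev Vh b ∩ L l)) :
    condP μ Y (V ∩ L true) - condP μ Y (V ∩ L false)
      = condP μ Y (Vh ∩ L true) - condP μ Y (Vh ∩ L false) := by
  have hpair (l a b : Bool) : CondIndepEvent μ Y (ev V a ∩ ev Vh b) (L l) := by
    simpa only [CondIndepEvent, Set.inter_assoc] using hind l a b
  have hV_indep (l : Bool) : CondIndepEvent μ Y V (L l) :=
    .of_forall_inter_ev hVh (hpair l true)
  have hVh_indep (l : Bool) : CondIndepEvent μ Y Vh (L l) :=
    .of_forall_inter_ev hV fun a ↦ Set.inter_comm (ev V a) Vh ▸ hpair l a true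
  exact stmt_0_general (fun l ↦ measure_ne_top μ (L l)) (fun l ↦ (hposVL l).ne')
    (fun l ↦ (hposVhL l).ne') hV_indep hVh_indep true false
end

section
/- Suppose that for each ℓ ∈ {0,1} and each a ∈ {0,1}, P(Y | Vᵃ ∩ V̂ ∩ L_ℓ) = P(Y | Vᵃ ∩ L_ℓ) (i.e., y is conditionally independent of the proxy given the covariate and the group), and that for each ℓ ∈ {0,1} the conditional precision of the proxy is at least 1 − p, i.e., P(Vᶜ | V̂ ∩ L_ℓ) ≤ p. Then |G − Ĝ| ≤ 2p. -/
open MeasureTheory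

/-! Under the law conditioned on `V̂ ∩ L_ℓ`, the law of total probability writes `P(Y)` as the
mean of `P(Y | V)` and `P(Y | Vᶜ)` with weights `P(V)` and `P(Vᶜ)`. Hence
`P(Y | V) - P(Y) = (P(Y | V) - P(Y | Vᶜ)) P(Vᶜ)`, which is at most `P(Vᶜ)` in absolute value.
Conditional independence turns `P(Y | V ∩ V̂ ∩ L_ℓ)` into `P(Y | V ∩ L_ℓ)`, so this bounds the
error made on the group `ℓ`. -/

open ProbabilityTheory

section

variable {Ω : Type*} [MeasurableSpace Ω]

theorem condP_eq_real_cond (μ : Measure Ω) (A : Set Ω) {B : Set Ω} (hB : MeasurableSet B) :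
    condP μ A B = μ[|B].real A := by
  rw [condP, measureReal_def, cond_apply hB, ENNReal.toReal_mul, ENNReal.toReal_inv,
    Set.inter_comm, div_eq_inv_mul]

theorem real_cond_mul_add_real_cond_compl_mul (μ : Measure Ω) [IsFiniteMeasure μ]
    {V : Set Ω} (hV : MeasurableSet V) (Y : Set Ω) :
    μ[|V].real Y * μ.real V + μ[|Vᶜ].real Y * μ.real Vᶜ = μ.real Y := by
  simp only [measureReal_def, ← ENNReal.toReal_mul]
  rw [← ENNReal.toReal_add (by finiteness) (by finiteness), cond_add_cond_compl_eq hV]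

theorem abs_real_cond_sub_real_le_real_compl (ν : Measure Ω) [IsProbabilityMeasure ν]
    {V : Set Ω} (hV : MeasurableSet V) (Y : Set Ω) :
    |ν[|V].real Y - ν.real Y| ≤ ν.real Vᶜ := by
  have difference :
      ν[|V].real Y - ν.real Y = (ν[|V].real Y - ν[|Vᶜ].real Y) * ν.real Vᶜ := by
    linear_combination real_cond_mul_add_real_cond_compl_mul ν hV Y -
      ν[|V].real Y * probReal_add_probReal_compl (μ := ν) hV
  have conditional_gap : |ν[|V].real Y - ν[|Vᶜ].real Y| ≤ 1 :=
    abs_sub_le_of_nonneg_of_le measureReal_nonneg measureReal_le_one measureReal_nonneg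
      measureReal_le_one
  rw [difference, abs_mul, abs_of_nonneg measureReal_nonneg]
  exact mul_le_of_le_one_left measureReal_nonneg conditional_gap

theorem abs_condP_inter_sub_condP_le_condP_compl (μ : Measure Ω) [IsFiniteMeasure μ] (Y : Set Ω)
    {V B : Set Ω} (hV : MeasurableSet V) (hB : MeasurableSet B) (hμB : μ B ≠ 0) :
    |condP μ Y (V ∩ B) - condP μ Y B| ≤ condP μ Vᶜ B := by
  have : IsProbabilityMeasure μ[|B] := cond_isProbabilityMeasure hμB
  rw [condP_eq_real_cond μ Y (hV.inter hB), condP_eq_real_cond μ Y hB,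
    condP_eq_real_cond μ Vᶜ hB, Set.inter_comm V B, ← cond_cond_eq_cond_inter hB hV]
  exact abs_real_cond_sub_real_le_real_compl μ[|B] hV Y

theorem stmt_1_general (μ : Measure Ω) [IsFiniteMeasure μ]
    (Y V Vh : Set Ω) (L : Bool → Set Ω)
    (hV : MeasurableSet V) (hVh : MeasurableSet Vh) (hL : ∀ l, MeasurableSet (L l))
    (hpos : ∀ l, 0 < μ (V ∩ Vh ∩ L l))
    (hind : ∀ l, condP μ Y (V ∩ Vh ∩ L l) = condP μ Y (V ∩ L l)) :
    |(condP μ Y (V ∩ L true) - condP μ Y (V ∩ L false))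
      - (condP μ Y (Vh ∩ L true) - condP μ Y (Vh ∩ L false))|
      ≤ condP μ Vᶜ (Vh ∩ L true) + condP μ Vᶜ (Vh ∩ L false) := by
  have proxy_error (l : Bool) :
      |condP μ Y (V ∩ L l) - condP μ Y (Vh ∩ L l)| ≤ condP μ Vᶜ (Vh ∩ L l) := by
    have hμ : μ (V ∩ (Vh ∩ L l)) ≠ 0 := by simpa only [Set.inter_assoc] using (hpos l).ne'
    rw [← hind l, Set.inter_assoc]
    exact abs_condP_inter_sub_condP_le_condP_compl μ Y hV (hVh.inter (hL l))
      (mt (measure_mono_null Set.inter_subset_right) hμ)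
  rw [sub_sub_sub_comm]
  exact (abs_sub _ _).trans (add_le_add (proxy_error true) (proxy_error false))

end

/-- If `Y` is conditionally independent of the proxy given the covariate and the group, and
the proxy has conditional precision at least `1 - p` on each slice, then `|G - Ĝ| ≤ 2p`. -/
theorem stmt_1 {Ω : Type*} [MeasurableSpace Ω] (μ : Measure Ω) [IsProbabilityMeasure μ]
    (Y V Vh : Set Ω) (L : Bool → Set Ω) (p : ℝ)
    (hY : MeasurableSet Y) (hV : MeasurableSet V) (hVh : MeasurableSet Vh)
    (hL : ∀ l, MeasurableSet (L l))
    (hpos1 : ∀ (l a : Bool), 0 < μ (ev V a ∩ Vh ∩ L l))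
    (hpos2 : ∀ (l a : Bool), 0 < μ (ev V a ∩ L l))
    (hposVL : ∀ l, 0 < μ (V ∩ L l))
    (hposVhL : ∀ l, 0 < μ (Vh ∩ L l))
    (hind : ∀ (l a : Bool),
      condP μ Y (ev V a ∩ Vh ∩ L l) = condP μ Y (ev V a ∩ L l))
    (hprec : ∀ l : Bool, condP μ Vᶜ (Vh ∩ L l) ≤ p) :
    |(condP μ Y (V ∩ L true) - condP μ Y (V ∩ L false))
      - (condP μ Y (Vh ∩ L true) - condP μ Y (Vh ∩ L false))| ≤ 2 * p := by
  exact (stmt_1_general μ Y V Vh L hV hVh hL (hpos1 · true) (hind · true)).trans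
    (by linarith only [hprec true, hprec false])
end

section
/- Fix ℓ ∈ {0,1} and suppose that for each a ∈ {0,1}, P(Y | Vᵃ ∩ V̂ ∩ L_ℓ) = P(Y | Vᵃ ∩ L_ℓ) (i.e., y is conditionally independent of the proxy given the covariate on slice ℓ). Then |P(Y | V ∩ L_ℓ) − P(Y | V̂ ∩ L_ℓ)| ≤ P(Vᶜ | V̂ ∩ L_ℓ), i.e., the per-slice estimation error is bounded by the precision error p_ℓ of the proxy on slice ℓ. -/
open MeasureTheory

/-!
By the law of total probability, `P(A | B)` is the average of `P(A | V ∩ B)` and `P(A | Vᶜ ∩ B)`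
with weights `P(V | B)` and `P(Vᶜ | B)`. It therefore differs from `P(A | V ∩ B)` by `P(Vᶜ | B)`
times a difference of two probabilities. With `B = Vh ∩ Ll`, conditional independence turns
`P(Y | V ∩ B)` into `P(Y | V ∩ Ll)`.
-/

section CondP

variable {Ω : Type*} [MeasurableSpace Ω] {μ : Measure Ω}

lemma condP_nonneg (A B : Set Ω) : 0 ≤ condP μ A B :=
  div_nonneg measureReal_nonneg measureReal_nonneg

variable [IsFiniteMeasure μ]

lemma condP_le_one (A B : Set Ω) : condP μ A B ≤ 1 :=
  div_le_one_of_le₀ (measureReal_mono Set.inter_subset_right) measureReal_nonneg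

lemma condP_inter_eq_mul (A V B : Set Ω) :
    condP μ (V ∩ A) B = condP μ V B * condP μ A (V ∩ B) := by
  have null_of_null : μ.real (V ∩ B) = 0 → μ.real (A ∩ (V ∩ B)) = 0 :=
    measureReal_mono_null Set.inter_subset_right
  calc
    condP μ (V ∩ A) B = μ.real (A ∩ (V ∩ B)) / μ.real B := by
      rw [condP, Set.inter_comm V A, Set.inter_assoc, measureReal_def, measureReal_def]
    _ = μ.real (V ∩ B) / μ.real B * (μ.real (A ∩ (V ∩ B)) / μ.real (V ∩ B)) := by
      rw [div_mul_eq_mul_div, mul_div_cancel_of_imp' null_of_null]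

lemma condP_inter_add_condP_compl_inter {V : Set Ω} (hV : MeasurableSet V) (A B : Set Ω) :
    condP μ (V ∩ A) B + condP μ (Vᶜ ∩ A) B = condP μ A B := by
  have split : μ.real (V ∩ A ∩ B) + μ.real (Vᶜ ∩ A ∩ B) = μ.real (A ∩ B) := by
    rw [Set.inter_assoc, Set.inter_assoc, Set.inter_comm V, Set.inter_comm Vᶜ, ← Set.sdiff_eq]
    exact measureReal_inter_add_sdiff hV
  simp only [condP, ← measureReal_def, ← add_div, split]

lemma condP_univ {B : Set Ω} (hB : μ B ≠ 0) : condP μ Set.univ B = 1 := by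
  rw [condP, Set.univ_inter]
  exact div_self (ENNReal.toReal_ne_zero.2 ⟨hB, measure_ne_top μ B⟩)

lemma condP_add_condP_compl {V B : Set Ω} (hV : MeasurableSet V) (hB : μ B ≠ 0) :
    condP μ V B + condP μ Vᶜ B = 1 := by
  simpa only [Set.inter_univ, condP_univ hB] using
    condP_inter_add_condP_compl_inter (μ := μ) hV Set.univ B

lemma condP_total_probability {V : Set Ω} (hV : MeasurableSet V) (A B : Set Ω) :
    condP μ A B = condP μ V B * condP μ A (V ∩ B) + condP μ Vᶜ B * condP μ A (Vᶜ ∩ B) := by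
  rw [← condP_inter_eq_mul, ← condP_inter_eq_mul, condP_inter_add_condP_compl_inter hV]

lemma condP_inter_sub_condP_eq {V B : Set Ω} (hV : MeasurableSet V) (hB : μ B ≠ 0) (A : Set Ω) :
    condP μ A (V ∩ B) - condP μ A B =
      condP μ Vᶜ B * (condP μ A (V ∩ B) - condP μ A (Vᶜ ∩ B)) := by
  linear_combination
    (-condP μ A (V ∩ B)) * condP_add_condP_compl (μ := μ) hV hB -
      condP_total_probability (μ := μ) hV A B

lemma abs_condP_sub_condP_le_one (A B C : Set Ω) : |condP μ A B - condP μ A C| ≤ 1 :=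
  abs_sub_le_of_nonneg_of_le (condP_nonneg A B) (condP_le_one A B)
    (condP_nonneg A C) (condP_le_one A C)

lemma abs_condP_inter_sub_condP_le {V B : Set Ω} (hV : MeasurableSet V) (hB : μ B ≠ 0)
    (A : Set Ω) : |condP μ A (V ∩ B) - condP μ A B| ≤ condP μ Vᶜ B := by
  rw [condP_inter_sub_condP_eq hV hB, abs_mul, abs_of_nonneg (condP_nonneg Vᶜ B)]
  exact mul_le_of_le_one_right (condP_nonneg Vᶜ B) (abs_condP_sub_condP_le_one A _ _)

theorem stmt_2_general {Y V Vh Ll : Set Ω} (hV : MeasurableSet V) (hpos : 0 < μ (V ∩ Vh ∩ Ll))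
    (hind : condP μ Y (V ∩ Vh ∩ Ll) = condP μ Y (V ∩ Ll)) :
    |condP μ Y (V ∩ Ll) - condP μ Y (Vh ∩ Ll)| ≤ condP μ Vᶜ (Vh ∩ Ll) := by
  rw [Set.inter_assoc] at hpos hind
  have hproxy : 0 < μ (Vh ∩ Ll) := hpos.trans_le (measure_mono Set.inter_subset_right)
  rw [← hind]
  exact abs_condP_inter_sub_condP_le hV hproxy.ne' Y

end CondP

/-- On a fixed slice `Ll`, if `Y` is conditionally independent of the proxy given the covariate,
then the per-slice estimation error is bounded by the precision error of the proxy. -/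
theorem stmt_2 {Ω : Type*} [MeasurableSpace Ω] (μ : Measure Ω) [IsProbabilityMeasure μ]
    (Y V Vh Ll : Set Ω)
    (hY : MeasurableSet Y) (hV : MeasurableSet V) (hVh : MeasurableSet Vh)
    (hLl : MeasurableSet Ll)
    (hpos1 : ∀ a : Bool, 0 < μ (ev V a ∩ Vh ∩ Ll))
    (hpos2 : ∀ a : Bool, 0 < μ (ev V a ∩ Ll))
    (hposVL : 0 < μ (V ∩ Ll))
    (hposVhL : 0 < μ (Vh ∩ Ll))
    (hind : ∀ a : Bool, condP μ Y (ev V a ∩ Vh ∩ Ll) = condP μ Y (ev V a ∩ Ll)) :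
    |condP μ Y (V ∩ Ll) - condP μ Y (Vh ∩ Ll)| ≤ condP μ Vᶜ (Vh ∩ Ll) := by
  exact stmt_2_general hV (hpos1 true) (hind true)
end

section
/- Let γ_A ∈ [0,1]. If for each ℓ ∈ {0,1} the conditional precision and the conditional recall of the proxy are both at least 1 − γ_A, i.e., p_ℓ ≤ γ_A and r_ℓ ≤ γ_A, then |G − Ĝ| ≤ 2 · γ_A. -/
open MeasureTheory

/-!
If `μ B ≤ μ A`, then `P(Y | A) ≤ μ (Y ∩ B) / μ A + P(Bᶜ | A) ≤ P(Y | B) + P(Bᶜ | A)`. The same bound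
for `Yᶜ` gives the reverse inequality, so conditioning on `A` or on `B` differs by at most
`P(Bᶜ | A)`. For the events `V ∩ L` and `V̂ ∩ L`, in the order of their measures, this is the recall
or the precision error, and each of the two groups contributes one such error.
-/

section condP

variable {Ω : Type*} [MeasurableSpace Ω] {μ : Measure Ω}

theorem condP_compl_inter_inter (V W L : Set Ω) :
    condP μ (V ∩ L)ᶜ (W ∩ L) = condP μ Vᶜ (W ∩ L) := by
  have same_trace : (V ∩ L)ᶜ ∩ (W ∩ L) = Vᶜ ∩ (W ∩ L) := by grind
  rw [condP, condP, same_trace]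

variable [IsFiniteMeasure μ] {Y A B : Set Ω}

theorem condP_compl (hY : MeasurableSet Y) (hA : 0 < μ A) :
    condP μ Yᶜ A = 1 - condP μ Y A := by
  have hA_real : μ.real A ≠ 0 := (ENNReal.toReal_pos hA.ne' (measure_ne_top μ A)).ne'
  have split : μ.real (Y ∩ A) + μ.real (Yᶜ ∩ A) = μ.real A := by
    rw [Set.inter_comm Y, Set.inter_comm Yᶜ, ← Set.sdiff_eq, measureReal_inter_add_sdiff hY]
  simp only [condP, ← measureReal_def]
  rw [eq_sub_iff_add_eq', ← add_div, split, div_self hA_real]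

theorem condP_sub_condP_le_of_measure_le (hB : 0 < μ B) (hBA : μ B ≤ μ A) :
    condP μ Y A - condP μ Y B ≤ condP μ Bᶜ A := by
  have hB_real : 0 < μ.real B := ENNReal.toReal_pos hB.ne' (measure_ne_top μ B)
  have hBA_real : μ.real B ≤ μ.real A := ENNReal.toReal_mono (measure_ne_top μ A) hBA
  have cover : Y ∩ A ⊆ (Y ∩ B) ∪ (Bᶜ ∩ A) := fun ω ⟨hωY, hωA⟩ =>
    (em (ω ∈ B)).imp (fun hωB => ⟨hωY, hωB⟩) (fun hωB => ⟨hωB, hωA⟩)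
  simp only [condP, ← measureReal_def]
  rw [sub_le_iff_le_add']
  calc μ.real (Y ∩ A) / μ.real A
      ≤ (μ.real (Y ∩ B) + μ.real (Bᶜ ∩ A)) / μ.real A := by
        gcongr
        exact (measureReal_mono cover).trans (measureReal_union_le _ _)
    _ = μ.real (Y ∩ B) / μ.real A + μ.real (Bᶜ ∩ A) / μ.real A := add_div ..
    _ ≤ μ.real (Y ∩ B) / μ.real B + μ.real (Bᶜ ∩ A) / μ.real A := by gcongr

theorem abs_condP_sub_condP_le_of_measure_le (hY : MeasurableSet Y) (hB : 0 < μ B)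
    (hBA : μ B ≤ μ A) : |condP μ Y A - condP μ Y B| ≤ condP μ Bᶜ A := by
  have upper : condP μ Y A - condP μ Y B ≤ condP μ Bᶜ A :=
    condP_sub_condP_le_of_measure_le hB hBA
  have lower : condP μ Yᶜ A - condP μ Yᶜ B ≤ condP μ Bᶜ A :=
    condP_sub_condP_le_of_measure_le hB hBA
  rw [condP_compl hY (hB.trans_le hBA), condP_compl hY hB, sub_sub_sub_cancel_left] at lower
  exact abs_sub_le_iff.mpr ⟨upper, lower⟩

theorem abs_condP_sub_condP_le_max (hY : MeasurableSet Y) (hA : 0 < μ A) (hB : 0 < μ B) :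
    |condP μ Y A - condP μ Y B| ≤ max (condP μ Bᶜ A) (condP μ Aᶜ B) := by
  rcases le_total (μ B) (μ A) with hBA | hAB
  · exact (abs_condP_sub_condP_le_of_measure_le hY hB hBA).trans (le_max_left _ _)
  · rw [abs_sub_comm]
    exact (abs_condP_sub_condP_le_of_measure_le hY hA hAB).trans (le_max_right _ _)

end condP

theorem stmt_8_general {Ω ι : Type*} [MeasurableSpace Ω] (μ : Measure Ω) [IsFiniteMeasure μ]
    (Y V Vh : Set Ω) (L : ι → Set Ω) (γ : ι → ℝ) (hY : MeasurableSet Y)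
    (hposVL : ∀ l, 0 < μ (V ∩ L l))
    (hposVhL : ∀ l, 0 < μ (Vh ∩ L l))
    (hprec : ∀ l, condP μ Vᶜ (Vh ∩ L l) ≤ γ l)
    (hrec : ∀ l, condP μ Vhᶜ (V ∩ L l) ≤ γ l) (i j : ι) :
    |(condP μ Y (V ∩ L i) - condP μ Y (V ∩ L j))
      - (condP μ Y (Vh ∩ L i) - condP μ Y (Vh ∩ L j))| ≤ γ i + γ j := by
  have proxy_error (l : ι) : |condP μ Y (V ∩ L l) - condP μ Y (Vh ∩ L l)| ≤ γ l := by
    refine (abs_condP_sub_condP_le_max hY (hposVL l) (hposVhL l)).trans ?_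
    rw [condP_compl_inter_inter, condP_compl_inter_inter]
    exact max_le (hrec l) (hprec l)
  rw [sub_sub_sub_comm]
  exact (abs_sub _ _).trans (add_le_add (proxy_error i) (proxy_error j))

/-- If the proxy has precision and recall at least `1 - γ_A` on each slice
(`p_ℓ ≤ γ_A` and `r_ℓ ≤ γ_A`), then `|G - Ĝ| ≤ 2 γ_A`. -/
theorem stmt_8 {Ω : Type*} [MeasurableSpace Ω] (μ : Measure Ω) [IsProbabilityMeasure μ]
    (Y V Vh : Set Ω) (L : Bool → Set Ω) (γA : ℝ)
    (hY : MeasurableSet Y) (hV : MeasurableSet V) (hVh : MeasurableSet Vh)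
    (hL : ∀ l, MeasurableSet (L l))
    (hγA : γA ∈ Set.Icc (0 : ℝ) 1)
    (hposVL : ∀ l, 0 < μ (V ∩ L l))
    (hposVhL : ∀ l, 0 < μ (Vh ∩ L l))
    (hprec : ∀ l : Bool, condP μ Vᶜ (Vh ∩ L l) ≤ γA)
    (hrec : ∀ l : Bool, condP μ Vhᶜ (V ∩ L l) ≤ γA) :
    |(condP μ Y (V ∩ L true) - condP μ Y (V ∩ L false))
      - (condP μ Y (Vh ∩ L true) - condP μ Y (Vh ∩ L false))| ≤ 2 * γA := by
  rw [two_mul]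
  exact stmt_8_general μ Y V Vh L (fun _ => γA) hY hposVL hposVhL hprec hrec true false
end

section
/- Let γ_B2, ε_B2 ∈ [0,1] and g ∈ ℝ. Suppose the model-closeness condition holds with gap g and error ε_B2, i.e., for each (a,b) ∈ {(1,1),(1,0),(0,1)}: |P(Y | Vᵃ ∩ V̂ᵇ ∩ L₁) − P(Y | Vᵃ ∩ V̂ᵇ ∩ L₀) − g| ≤ ε_B2, and suppose |r₀ − r₁| ≤ γ_B2 and |p₀ − p₁| ≤ γ_B2. Then |G − Ĝ| ≤ 2 · γ_B2 + 3 · ε_B2. -/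
open MeasureTheory

/-!
On a slice `L`, `P(Y | V ∩ L)` is the mixture of `P(Y | V ∩ V̂ ∩ L)` and `P(Y | V ∩ V̂ᶜ ∩ L)` with
weights `1 - r` and `r`, where `r` is the recall error on `L`. Replacing the weights of one slice by
those of the other costs at most `|r₀ - r₁| ≤ γ`, and with common weights the gap `G` is an average
of cell gaps, each within `ε` of `g`. Hence `|G - g| ≤ γ + ε`. Exchanging `V` and `V̂` turns recall
into precision and gives `|Ĝ - g| ≤ γ + ε`.
-/

/-- The statistical parity gap `P(Y | S ∩ L₁) - P(Y | S ∩ L₀)` of the prediction `Y` between the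
slices `L₀` and `L₁`, conditional on `S`. It is the gap `G` for `S = V`, the proxy gap `Ĝ` for
`S = V̂`, and the quantity controlled by model closeness when `S` is a cell of the confusion
matrix. -/
noncomputable def parityGap {Ω : Type*} [MeasurableSpace Ω] (μ : Measure Ω)
    (Y S L₀ L₁ : Set Ω) : ℝ :=
  condP μ Y (S ∩ L₁) - condP μ Y (S ∩ L₀)

lemma abs_mixture_le {r x y ε : ℝ} (hr : r ∈ Set.Icc 0 1) (hx : |x| ≤ ε)
    (hy : r ≠ 0 → |y| ≤ ε) : |(1 - r) * x + r * y| ≤ ε := by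
  have hry : r * |y| ≤ r * ε := by
    rcases eq_or_ne r 0 with rfl | hr₀
    · rw [zero_mul, zero_mul]
    · exact mul_le_mul_of_nonneg_left (hy hr₀) hr.1
  calc |(1 - r) * x + r * y|
      ≤ |(1 - r) * x| + |r * y| := abs_add_le _ _
    _ = (1 - r) * |x| + r * |y| := by
        rw [abs_mul, abs_mul, abs_of_nonneg (sub_nonneg.2 hr.2), abs_of_nonneg hr.1]
    _ ≤ (1 - r) * ε + r * ε := add_le_add (mul_le_mul_of_nonneg_left hx (sub_nonneg.2 hr.2)) hry
    _ = ε := by ring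

lemma abs_mixture_sub_mixture_sub_le {a₀ a₁ b₀ b₁ r₀ r₁ g ε γ : ℝ}
    (ha₀ : a₀ ∈ Set.Icc 0 1) (ha₁ : a₁ ∈ Set.Icc 0 1)
    (hb₀ : b₀ ∈ Set.Icc 0 1) (hb₁ : b₁ ∈ Set.Icc 0 1) (hr₁ : r₁ ∈ Set.Icc 0 1)
    (ha : |a₁ - a₀ - g| ≤ ε) (hb : r₀ ≠ 0 → r₁ ≠ 0 → |b₁ - b₀ - g| ≤ ε)
    (hr : |r₀ - r₁| ≤ γ) :
    |((1 - r₁) * a₁ + r₁ * b₁) - ((1 - r₀) * a₀ + r₀ * b₀) - g| ≤ γ + ε := by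
  have reweighting {x y : ℝ} (hx : x ∈ Set.Icc 0 1) (hy : y ∈ Set.Icc 0 1) :
      |(r₀ - r₁) * (x - y)| ≤ γ := by
    rw [abs_mul]
    have hxy : |x - y| ≤ 1 := abs_sub_le_of_nonneg_of_le hx.1 hx.2 hy.1 hy.2
    exact (mul_le_of_le_one_right (abs_nonneg _) hxy).trans hr
  -- For `r₀ = 0` nothing is known about `b₁ - b₀`, so the change of weights is charged to `a₁ - b₁`
  -- rather than to `a₀ - b₀`.
  by_cases hr₀ : r₀ = 0
  · calc |((1 - r₁) * a₁ + r₁ * b₁) - ((1 - r₀) * a₀ + r₀ * b₀) - g|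
        = |(r₀ - r₁) * (a₁ - b₁) + (a₁ - a₀ - g)| := by rw [hr₀]; ring_nf
      _ ≤ γ + ε := (abs_add_le _ _).trans (add_le_add (reweighting ha₁ hb₁) ha)
  · have averaging : |(1 - r₁) * (a₁ - a₀ - g) + r₁ * (b₁ - b₀ - g)| ≤ ε :=
      abs_mixture_le hr₁ ha (hb hr₀)
    calc |((1 - r₁) * a₁ + r₁ * b₁) - ((1 - r₀) * a₀ + r₀ * b₀) - g|
        = |(r₀ - r₁) * (a₀ - b₀) + ((1 - r₁) * (a₁ - a₀ - g) + r₁ * (b₁ - b₀ - g))| := by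
          ring_nf
      _ ≤ γ + ε := (abs_add_le _ _).trans (add_le_add (reweighting ha₀ hb₀) averaging)

section FiniteMeasure

variable {Ω : Type*} [MeasurableSpace Ω] {μ : Measure Ω} [IsFiniteMeasure μ]

lemma condP_mem_Icc (A B : Set Ω) : condP μ A B ∈ Set.Icc 0 1 :=
  ⟨div_nonneg measureReal_nonneg measureReal_nonneg,
    div_le_one_of_le₀ (measureReal_mono Set.inter_subset_right) measureReal_nonneg⟩

lemma condP_inter_add_condP_inter_compl (A B : Set Ω) {T : Set Ω} (hT : MeasurableSet T) :
    condP μ (A ∩ T) B + condP μ (A ∩ Tᶜ) B = condP μ A B := by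
  have additivity : μ.real (A ∩ T ∩ B) + μ.real (A ∩ Tᶜ ∩ B) = μ.real (A ∩ B) := by
    rw [Set.inter_right_comm A T, Set.inter_right_comm A Tᶜ, ← Set.sdiff_eq,
      measureReal_inter_add_sdiff hT]
  simp only [condP, ← measureReal_def, ← add_div, additivity]

lemma condP_compl_s11 {B T : Set Ω} (hT : MeasurableSet T) (hB : 0 < μ B) :
    condP μ Tᶜ B = 1 - condP μ T B := by
  have condP_univ : condP μ Set.univ B = 1 := by
    rw [condP, Set.univ_inter]
    exact div_self (ENNReal.toReal_ne_zero.2 ⟨hB.ne', measure_ne_top μ B⟩)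
  have h := condP_inter_add_condP_inter_compl (μ := μ) Set.univ B hT
  rw [Set.univ_inter, Set.univ_inter, condP_univ] at h
  linarith

lemma condP_mul_condP_inter (A B T : Set Ω) :
    condP μ T B * condP μ A (B ∩ T) = condP μ (A ∩ T) B := by
  simp only [condP, ← measureReal_def]
  rw [Set.inter_comm T B, Set.inter_assoc, Set.inter_comm T B]
  by_cases hBT : μ.real (B ∩ T) = 0
  · have hABT : μ.real (A ∩ (B ∩ T)) = 0 := measureReal_mono_null Set.inter_subset_right hBT
    rw [hBT, hABT, zero_div, zero_mul]
  · rw [mul_comm, div_mul_div_cancel₀ hBT]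

lemma condP_eq_mixture (A : Set Ω) {B T : Set Ω} (hT : MeasurableSet T) (hB : 0 < μ B) :
    condP μ A B =
      (1 - condP μ Tᶜ B) * condP μ A (B ∩ T) + condP μ Tᶜ B * condP μ A (B ∩ Tᶜ) := by
  rw [← condP_inter_add_condP_inter_compl A B hT, ← condP_mul_condP_inter,
    ← condP_mul_condP_inter, condP_compl_s11 hT hB, sub_sub_cancel]

lemma abs_parityGap_sub_le {Y S T L₀ L₁ : Set Ω} {g ε γ : ℝ} (hT : MeasurableSet T)
    (h₀ : 0 < μ (S ∩ T ∩ L₀)) (h₁ : 0 < μ (S ∩ T ∩ L₁))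
    (hgap : |parityGap μ Y (S ∩ T) L₀ L₁ - g| ≤ ε)
    (hgap_compl : 0 < μ (S ∩ Tᶜ ∩ L₀) → 0 < μ (S ∩ Tᶜ ∩ L₁) →
      |parityGap μ Y (S ∩ Tᶜ) L₀ L₁ - g| ≤ ε)
    (hweights : |condP μ Tᶜ (S ∩ L₀) - condP μ Tᶜ (S ∩ L₁)| ≤ γ) :
    |parityGap μ Y S L₀ L₁ - g| ≤ γ + ε := by
  have slice_eq_mixture {K : Set Ω} (hK : 0 < μ (S ∩ T ∩ K)) :
      condP μ Y (S ∩ K) = (1 - condP μ Tᶜ (S ∩ K)) * condP μ Y (S ∩ T ∩ K)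
        + condP μ Tᶜ (S ∩ K) * condP μ Y (S ∩ Tᶜ ∩ K) := by
    rw [Set.inter_right_comm S T, Set.inter_right_comm S Tᶜ]
    rw [Set.inter_right_comm] at hK
    exact condP_eq_mixture Y hT (pos_mono Set.inter_subset_left hK)
  have cell_pos {K : Set Ω} (hK : condP μ Tᶜ (S ∩ K) ≠ 0) : 0 < μ (S ∩ Tᶜ ∩ K) := by
    rw [Set.inter_comm S, Set.inter_assoc]
    exact pos_iff_ne_zero.2 fun hnull => hK (by simp [condP, hnull])
  rw [parityGap, slice_eq_mixture h₀, slice_eq_mixture h₁]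
  exact abs_mixture_sub_mixture_sub_le (condP_mem_Icc _ _) (condP_mem_Icc _ _)
    (condP_mem_Icc _ _) (condP_mem_Icc _ _) (condP_mem_Icc _ _) hgap
    (fun hr₀ hr₁ => hgap_compl (cell_pos hr₀) (cell_pos hr₁)) hweights

/-- Closeness on an off-diagonal cell is only asked for when that cell has positive mass in both
slices, since `condP` takes the junk value `0` otherwise; in particular `V̂ = V` is allowed. -/
theorem stmt_11_general {Y V Vh L₀ L₁ : Set Ω} {γ ε g : ℝ}
    (hV : MeasurableSet V) (hVh : MeasurableSet Vh)
    (h₀ : 0 < μ (V ∩ Vh ∩ L₀)) (h₁ : 0 < μ (V ∩ Vh ∩ L₁))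
    (hgap : |parityGap μ Y (V ∩ Vh) L₀ L₁ - g| ≤ ε)
    (hgap_falseNeg : 0 < μ (V ∩ Vhᶜ ∩ L₀) → 0 < μ (V ∩ Vhᶜ ∩ L₁) →
      |parityGap μ Y (V ∩ Vhᶜ) L₀ L₁ - g| ≤ ε)
    (hgap_falsePos : 0 < μ (Vᶜ ∩ Vh ∩ L₀) → 0 < μ (Vᶜ ∩ Vh ∩ L₁) →
      |parityGap μ Y (Vᶜ ∩ Vh) L₀ L₁ - g| ≤ ε)
    (hrec : |condP μ Vhᶜ (V ∩ L₀) - condP μ Vhᶜ (V ∩ L₁)| ≤ γ)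
    (hprec : |condP μ Vᶜ (Vh ∩ L₀) - condP μ Vᶜ (Vh ∩ L₁)| ≤ γ) :
    |parityGap μ Y V L₀ L₁ - parityGap μ Y Vh L₀ L₁| ≤ 2 * γ + 2 * ε := by
  have true_gap : |parityGap μ Y V L₀ L₁ - g| ≤ γ + ε :=
    abs_parityGap_sub_le hVh h₀ h₁ hgap hgap_falseNeg hrec
  have proxy_gap : |parityGap μ Y Vh L₀ L₁ - g| ≤ γ + ε := by
    rw [Set.inter_comm V Vh] at h₀ h₁ hgap
    rw [Set.inter_comm Vᶜ Vh] at hgap_falsePos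
    exact abs_parityGap_sub_le hV h₀ h₁ hgap hgap_falsePos hprec
  calc |parityGap μ Y V L₀ L₁ - parityGap μ Y Vh L₀ L₁|
      ≤ |parityGap μ Y V L₀ L₁ - g| + |g - parityGap μ Y Vh L₀ L₁| := abs_sub_le _ _ _
    _ = |parityGap μ Y V L₀ L₁ - g| + |parityGap μ Y Vh L₀ L₁ - g| := by rw [abs_sub_comm g]
    _ ≤ 2 * γ + 2 * ε := by linarith

end FiniteMeasure

/-- Case B2: if model closeness holds with gap `g` and error `ε_B2` on the cells
`(a,b) ∈ {(1,1),(1,0),(0,1)}` of the confusion matrix, and the precision errors (resp. recall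
errors) are `γ_B2`-close across slices, then `|G - Ĝ| ≤ 2 γ_B2 + 3 ε_B2`. -/
theorem stmt_11 {Ω : Type*} [MeasurableSpace Ω] (μ : Measure Ω) [IsProbabilityMeasure μ]
    (Y V Vh : Set Ω) (L : Bool → Set Ω) (γB2 εB2 g : ℝ)
    (hY : MeasurableSet Y) (hV : MeasurableSet V) (hVh : MeasurableSet Vh)
    (hL : ∀ l, MeasurableSet (L l))
    (hγB2 : γB2 ∈ Set.Icc (0 : ℝ) 1) (hεB2 : εB2 ∈ Set.Icc (0 : ℝ) 1)
    (hposVL : ∀ l, 0 < μ (V ∩ L l))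
    (hposVhL : ∀ l, 0 < μ (Vh ∩ L l))
    (hposCells : ∀ (l a b : Bool), (a, b) ≠ (false, false) →
      0 < μ (ev V a ∩ ev Vh b ∩ L l))
    (hmc : ∀ a b : Bool, (a, b) ≠ (false, false) →
      |condP μ Y (ev V a ∩ ev Vh b ∩ L true)
        - condP μ Y (ev V a ∩ ev Vh b ∩ L false) - g| ≤ εB2)
    (hrecClose : |condP μ Vhᶜ (V ∩ L false) - condP μ Vhᶜ (V ∩ L true)| ≤ γB2)
    (hprecClose : |condP μ Vᶜ (Vh ∩ L false) - condP μ Vᶜ (Vh ∩ L true)| ≤ γB2) :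
    |(condP μ Y (V ∩ L true) - condP μ Y (V ∩ L false))
      - (condP μ Y (Vh ∩ L true) - condP μ Y (Vh ∩ L false))|
      ≤ 2 * γB2 + 3 * εB2 :=
  (stmt_11_general hV hVh (hposCells false true true (by decide))
    (hposCells true true true (by decide)) (hmc true true (by decide))
    (fun _ _ => hmc true false (by decide)) (fun _ _ => hmc false true (by decide))
    hrecClose hprecClose).trans (by linarith [hεB2.1])
end
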